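/- arXiv:2301.11552 — 11 statements merged into one kernel-verified Lean document; each statement's English description precedes it below -/
import Mathlib

section
/- With the notation of the context, for every i with 0 ≤ i ≤ n one has Σ_{j=0}^{n} β_{ij}^{n} ( j(j−1)·f_{j−1} + (n−j)(n−j−1)·f_{j+1} ) = √−1 · i(n−i) · (h_{i−1} − h_{i+1}), where in the left-hand sum the terms with j = 0 and j = n have vanishing coefficients (so f_{−1}, f_{n+1} never occur), and on the right-hand side h_{−1}, h_{n+1} may be taken to be 0 since their coefficients i(n−i) vanish at i = 0, n. -/
open Finset Complex

/-!
Put `x₂ = 1` and write `a = X + √-1`, `b = X - √-1` in `ℂ[X]`, so that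
`p_i = a ^ i * b ^ (n - i) = ∑ j, β_{ij} X ^ j`. If `L` denotes the linear functional
`X ^ j ↦ f j`, then `h i = L p_i`, and the left-hand side of the theorem is `L (D p_i)` for the
second-order differential operator
`D p = X * ((1 + X ^ 2) p'' - 2 (n - 1) X p' + n (n - 1) p)`,
which sends `X ^ j` to `j (j - 1) X ^ (j - 1) + (n - j) (n - j - 1) X ^ (j + 1)`.
It remains to see that `D p_i = √-1 i (n - i) (p_{i-1} - p_{i+1})`. With `m = n - i`, the first-order
equation `a b p' = (i b + m a) p` and its derivative give `a b D p_i = 4 i m X p_i`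
(`betaOp_mul`), and `p_{i-1} - p_{i+1} = (b² - a²) a ^ (i - 1) b ^ (m - 1)` with
`b² - a² = -4 √-1 X`.
-/

open Polynomial in
/-- The operator `p ↦ X * ((1 + X ^ 2) p'' - 2 (n - 1) X p' + n (n - 1) p)` on `ℂ[X]`. -/
noncomputable def betaOp (n : ℕ) (p : ℂ[X]) : ℂ[X] :=
  X * ((1 + X ^ 2) * derivative (derivative p) - 2 * ((n : ℂ[X]) - 1) * X * derivative p
    + (n : ℂ[X]) * ((n : ℂ[X]) - 1) * p)

open Polynomial in
/-- The functional `X ^ j ↦ f j` on `ℂ[X]`. -/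
noncomputable def betaFun (f : ℕ → ℂ) : ℂ[X] →ₗ[ℂ] ℂ :=
  (Polynomial.basisMonomials ℂ).constr ℂ f

open Polynomial in
lemma betaFun_C_mul_X_pow (f : ℕ → ℂ) (c : ℂ) (j : ℕ) :
    betaFun f (C c * X ^ j) = c * f j := by
  have h := (Polynomial.basisMonomials ℂ).constr_basis ℂ f j
  rw [Polynomial.coe_basisMonomials] at h
  have e : (C c * X ^ j : ℂ[X]) = c • monomial j (1 : ℂ) := by
    rw [C_mul_X_pow_eq_monomial, smul_monomial, smul_eq_mul, mul_one]
  rw [e, map_smul, betaFun, h, smul_eq_mul]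

open Polynomial in
lemma betaOp_sum (n : ℕ) (s : Finset ℕ) (g : ℕ → ℂ[X]) :
    betaOp n (∑ j ∈ s, g j) = ∑ j ∈ s, betaOp n (g j) := by
  simp only [betaOp, derivative_sum, Finset.mul_sum, Finset.sum_add_distrib,
    Finset.sum_sub_distrib, mul_add, mul_sub]

open Polynomial in
lemma betaOp_C_mul_X_pow (n : ℕ) (c : ℂ) (j : ℕ) :
    betaOp n (C c * X ^ j) = C (c * (j * (j - 1))) * X ^ (j - 1)
      + C (c * ((n - j) * (n - j - 1))) * X ^ (j + 1) := by
  -- the exponents `j - 1`, `j - 2` produced by differentiation are truncated for `j ≤ 1`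
  rcases j with _ | _ | j
  · simp [betaOp]; ring
  · simp [betaOp]; ring
  · simp [betaOp]; ring

open Polynomial in
lemma mul_derivative_pow_X_add_C (c : ℂ) (k : ℕ) :
    (X + C c) * derivative ((X + C c) ^ k) = (k : ℂ[X]) * (X + C c) ^ k := by
  rcases k with _ | k
  · simp
  · rw [derivative_X_add_C_pow, Nat.add_sub_cancel, map_natCast]; ring

open Polynomial in
lemma C_I_sq : (C Complex.I : ℂ[X]) ^ 2 = -1 := by
  rw [← C_pow, Complex.I_sq, C_neg, C_1]

open Polynomial in
/-- `a b D p = 4 i m X p` for `p = a ^ i * b ^ m`, where `a = X + √-1` and `b = X - √-1`. -/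
lemma betaOp_mul (i m : ℕ) :
    (X + C Complex.I) * (X - C Complex.I) *
        betaOp (i + m) ((X + C Complex.I) ^ i * (X - C Complex.I) ^ m) =
      4 * (i : ℂ[X]) * (m : ℂ[X]) * X * ((X + C Complex.I) ^ i * (X - C Complex.I) ^ m) := by
  have ha := mul_derivative_pow_X_add_C Complex.I i
  have hb := mul_derivative_pow_X_add_C (-Complex.I) m
  rw [C_neg, ← sub_eq_add_neg] at hb
  have hJ := C_I_sq
  set J : ℂ[X] := C Complex.I with hJdef
  have hJ' : derivative J = 0 := derivative_C
  set p : ℂ[X] := (X + J) ^ i * (X - J) ^ m with hp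
  have h1 : (X + J) * (X - J) * derivative p
      = ((i : ℂ[X]) * (X - J) + (m : ℂ[X]) * (X + J)) * p := by
    rw [hp, derivative_mul]
    linear_combination (X - J) * (X - J) ^ m * ha + (X + J) * (X + J) ^ i * hb
  have h2 := congrArg derivative h1
  simp only [derivative_mul, derivative_add, derivative_sub, derivative_X, hJ',
    derivative_natCast] at h2
  unfold betaOp
  push_cast
  clear_value p J
  generalize derivative (derivative p) = p2 at *
  generalize derivative p = p1 at *
  have h3 : (1 + X ^ 2) * p2 - 2 * ((i : ℂ[X]) + (m : ℂ[X]) - 1) * X * p1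
      + ((i : ℂ[X]) + (m : ℂ[X])) * ((i : ℂ[X]) + (m : ℂ[X]) - 1) * p
      = ((i : ℂ[X]) + (m : ℂ[X])) ^ 2 * p - ((m : ℂ[X]) * (X - J) + (i : ℂ[X]) * (X + J)) * p1 := by
    linear_combination h2 + p2 * hJ
  rw [h3]
  linear_combination (-X * ((m : ℂ[X]) * (X - J) + (i : ℂ[X]) * (X + J))) * h1
    - 4 * (i : ℂ[X]) * (m : ℂ[X]) * X * p * hJ

open Polynomial in
lemma betaOp_eq (n i : ℕ) (hi : i ≤ n) :
    betaOp n ((X + C Complex.I) ^ i * (X - C Complex.I) ^ (n - i)) =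
      C (Complex.I * ((i : ℂ) * ((n : ℂ) - i))) *
        ((X + C Complex.I) ^ (i - 1) * (X - C Complex.I) ^ (n - (i - 1))
          - (X + C Complex.I) ^ (i + 1) * (X - C Complex.I) ^ (n - (i + 1))) := by
  obtain ⟨m, rfl⟩ := Nat.exists_eq_add_of_le hi
  have hne : ((X + C Complex.I) * (X - C Complex.I) : ℂ[X]) ≠ 0 :=
    mul_ne_zero (X_add_C_ne_zero _) (X_sub_C_ne_zero _)
  apply mul_left_cancel₀ hne
  rw [Nat.add_sub_cancel_left, betaOp_mul]
  have hJ := C_I_sq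
  rcases i with _ | i
  · simp
  rcases m with _ | m
  · simp
  rw [show i + 1 + (m + 1) - (i + 1 - 1) = m + 2 by omega,
    show i + 1 + (m + 1) - (i + 1 + 1) = m by omega, Nat.add_sub_cancel]
  simp only [C_mul, C_sub, map_natCast]
  push_cast
  generalize C Complex.I = J at *
  linear_combination (4 * ((i : ℂ[X]) + 1) * ((m : ℂ[X]) + 1) * X * (X + J) ^ (i + 1)
    * (X - J) ^ (m + 1)) * hJ

/-- With `β_{ij}^n` defined by
`(x₁+√−1·x₂)^i (x₁−√−1·x₂)^{n−i} = Σ_j β_{ij}^n x₁^j x₂^{n−j}` and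
`h_i = Σ_j β_{ij}^n f_j`, one has for all `0 ≤ i ≤ n`
`Σ_{j=0}^{n} β_{ij}^{n} (j(j−1) f_{j−1} + (n−j)(n−j−1) f_{j+1})
  = √−1 · i(n−i) · (h_{i−1} − h_{i+1})`.
(Terms `f_{−1}`, `f_{n+1}`, `h_{−1}`, `h_{n+1}` carry vanishing coefficients; with
natural-number truncated subtraction in the index they never contribute.) -/
theorem beta_lemma_one (n : ℕ) (hn : 1 ≤ n) (β : ℕ → ℕ → ℂ) (f h : ℕ → ℂ)
    (hβ : ∀ i ≤ n, ∀ x₁ x₂ : ℂ,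
      (x₁ + Complex.I * x₂) ^ i * (x₁ - Complex.I * x₂) ^ (n - i) =
        ∑ j ∈ Finset.range (n + 1), β i j * x₁ ^ j * x₂ ^ (n - j))
    (hh : ∀ i ≤ n, h i = ∑ j ∈ Finset.range (n + 1), β i j * f j) :
    ∀ i ≤ n,
      ∑ j ∈ Finset.range (n + 1), β i j *
          ((j : ℂ) * ((j : ℂ) - 1) * f (j - 1) +
            ((n : ℂ) - j) * ((n : ℂ) - j - 1) * f (j + 1)) =
        Complex.I * ((i : ℂ) * ((n : ℂ) - i)) * (h (i - 1) - h (i + 1)) := by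
  -- setting `x₂ = 1` identifies the polynomials `p_i` with their expansions
  have hp : ∀ i ≤ n, ((Polynomial.X + Polynomial.C Complex.I) ^ i * (Polynomial.X - Polynomial.C Complex.I) ^ (n - i) : Polynomial ℂ)
      = ∑ j ∈ Finset.range (n + 1), Polynomial.C (β i j) * Polynomial.X ^ j := by
    intro i hi
    apply Polynomial.funext
    intro x
    simpa [Polynomial.eval_finsetSum] using hβ i hi x 1
  have hL : ∀ i ≤ n, betaFun f ((Polynomial.X + Polynomial.C Complex.I) ^ i * (Polynomial.X - Polynomial.C Complex.I) ^ (n - i)) = h i := by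
    intro i hi
    rw [hp i hi, map_sum, hh i hi]
    simp only [betaFun_C_mul_X_pow]
  intro i hi
  have key := congrArg (betaFun f) (betaOp_eq n i hi)
  rw [← Polynomial.smul_eq_C_mul, map_smul, map_sub, hL (i - 1) (by omega), hp i hi, betaOp_sum,
    map_sum, smul_eq_mul] at key
  simp only [betaOp_C_mul_X_pow, map_add, betaFun_C_mul_X_pow] at key
  -- for `i = n` the value `h (n + 1)` is unconstrained, but its coefficient vanishes
  have key' : Complex.I * ((i : ℂ) * ((n : ℂ) - i)) * (h (i - 1) - h (i + 1)) =
      Complex.I * ((i : ℂ) * ((n : ℂ) - i)) * (h (i - 1) -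
        betaFun f ((Polynomial.X + Polynomial.C Complex.I) ^ (i + 1) * (Polynomial.X - Polynomial.C Complex.I) ^ (n - (i + 1)))) := by
    rcases hi.eq_or_lt with rfl | hlt
    · simp
    · rw [hL (i + 1) hlt]
  rw [key', ← key]
  refine Finset.sum_congr rfl fun j _ => ?_
  ring
end

section
/- With the notation of the context, for every i with 0 ≤ i ≤ n−1 one has Σ_{j=1}^{n} j·β_{ij}^{n}·f_{j−1} = (√−1/2) · ( i·h_{i−1} + (n−2i)·h_i − (n−i)·h_{i+1} ), where at i = 0 the term i·h_{i−1} is 0 (so h_{−1} never occurs). -/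
/-!
At `x₂ = 1`, the generating polynomial `q_i = ∑_j β_{ij} X^j` is `(X + √-1)^i (X - √-1)^(n-i)`.
Since `1 = -(√-1/2) ((X + √-1) - (X - √-1))`, multiplying the product-rule expression for `q_i'` by
this constant restores the total degree `n` and gives
`q_i' = (√-1/2) (i q_{i-1} + (n - 2i) q_i - (n - i) q_{i+1})` (`derivative_pow_mul_pow`).
Applying to both sides the linear functional that sends `X^j` to `f_j` for `j ≤ n` yields the
theorem: it sends `q_i` to `h_i` and `q_i'` to `∑_j j β_{ij} f_{j-1}`.
-/

open Finset Complex

/-- The derivative recurrence for `(X + √-1)^i (X - √-1)^m`, where `n = i + m` and `m = k + 1`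
is positive. When `i = 0` the factor `i` kills the term with the truncated index `i - 1`. -/
lemma derivative_pow_mul_pow (i k : ℕ) :
    Polynomial.derivative
        ((Polynomial.X + Polynomial.C I) ^ i * (Polynomial.X - Polynomial.C I) ^ (k + 1)) =
      Polynomial.C (I / 2) *
        (Polynomial.C (i : ℂ) * ((Polynomial.X + Polynomial.C I) ^ (i - 1) *
            (Polynomial.X - Polynomial.C I) ^ (k + 2)) +
          Polynomial.C ((k : ℂ) + 1 - i) * ((Polynomial.X + Polynomial.C I) ^ i *
            (Polynomial.X - Polynomial.C I) ^ (k + 1)) -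
          Polynomial.C ((k : ℂ) + 1) * ((Polynomial.X + Polynomial.C I) ^ (i + 1) *
            (Polynomial.X - Polynomial.C I) ^ k)) := by
  apply Polynomial.funext
  intro x
  have hI : I ^ 2 = -1 := I_sq
  rcases i with _ | i
  · simp [Polynomial.derivative_pow]
    linear_combination (((k : ℂ) + 1) * (x - I) ^ k) * hI
  · simp [Polynomial.derivative_pow]
    linear_combination (((i : ℂ) + 1) * (x + I) ^ i * (x - I) ^ (k + 1)
      + ((k : ℂ) + 1) * (x + I) ^ (i + 1) * (x - I) ^ k) * hI

/-- With `β_{ij}^n` defined by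
`(x₁+√−1·x₂)^i (x₁−√−1·x₂)^{n−i} = Σ_j β_{ij}^n x₁^j x₂^{n−j}` and
`h_i = Σ_j β_{ij}^n f_j`, one has for all `0 ≤ i ≤ n−1`
`Σ_{j=1}^{n} j β_{ij}^{n} f_{j−1} = (√−1/2)(i h_{i−1} + (n−2i) h_i − (n−i) h_{i+1})`.
(At `i = 0` the term `i·h_{i−1}` vanishes, so `h_{−1}` never occurs.) -/
theorem beta_lemma_two (n : ℕ) (hn : 1 ≤ n) (β : ℕ → ℕ → ℂ) (f h : ℕ → ℂ)
    (hβ : ∀ i ≤ n, ∀ x₁ x₂ : ℂ,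
      (x₁ + Complex.I * x₂) ^ i * (x₁ - Complex.I * x₂) ^ (n - i) =
        ∑ j ∈ Finset.range (n + 1), β i j * x₁ ^ j * x₂ ^ (n - j))
    (hh : ∀ i ≤ n, h i = ∑ j ∈ Finset.range (n + 1), β i j * f j) :
    ∀ i ≤ n - 1,
      ∑ j ∈ Finset.Icc 1 n, (j : ℂ) * β i j * f (j - 1) =
        (Complex.I / 2) *
          ((i : ℂ) * h (i - 1) + ((n : ℂ) - 2 * i) * h i - ((n : ℂ) - i) * h (i + 1)) := by
  intro i hi
  obtain ⟨k, rfl⟩ : ∃ k, n = i + (k + 1) := ⟨n - i - 1, by omega⟩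
  set n := i + (k + 1) with hn_def
  let q : ℕ → Polynomial ℂ := fun i =>
    ∑ j ∈ Finset.range (n + 1), Polynomial.C (β i j) * Polynomial.X ^ j
  have hq : ∀ l ≤ n, q l =
      (Polynomial.X + Polynomial.C I) ^ l * (Polynomial.X - Polynomial.C I) ^ (n - l) := by
    intro l hl
    apply Polynomial.funext
    intro x
    have := hβ l hl x 1
    simp only [mul_one, one_pow] at this
    simp [q, Polynomial.eval_finsetSum, this]
  have hc : ∀ l j, (q l).coeff j = if j ≤ n then β l j else 0 := by
    intro l j
    simp [q, Polynomial.coeff_C_mul, Polynomial.coeff_X_pow]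
  -- At `i = 0` the truncated index gives `q (0 - 1) = q 0`, which the factor `i` kills.
  have hd : Polynomial.derivative (q i) = Polynomial.C (I / 2) *
      (Polynomial.C (i : ℂ) * q (i - 1) + Polynomial.C ((n : ℂ) - 2 * i) * q i -
        Polynomial.C ((n : ℂ) - i) * q (i + 1)) := by
    have h0 : Polynomial.C (i : ℂ) * q (i - 1) = Polynomial.C (i : ℂ) *
        ((Polynomial.X + Polynomial.C I) ^ (i - 1) *
          (Polynomial.X - Polynomial.C I) ^ (k + 2)) := by
      rcases Nat.eq_zero_or_pos i with h | h
      · simp [h]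
      · rw [hq (i - 1) (by omega), show n - (i - 1) = k + 2 by omega]
    rw [h0, hq i (by omega), hq (i + 1) (by omega), show n - i = k + 1 by omega,
      show n - (i + 1) = k by omega, derivative_pow_mul_pow,
      show (n : ℂ) - 2 * i = (k : ℂ) + 1 - i by rw [hn_def]; push_cast; ring,
      show (n : ℂ) - i = (k : ℂ) + 1 by rw [hn_def]; push_cast; ring]
  have hcoeff : ∀ j ∈ Finset.range (n + 1), (if j + 1 ≤ n then β i (j + 1) else 0) * ((j : ℂ) + 1) =
      (I / 2) * ((i : ℂ) * β (i - 1) j + ((n : ℂ) - 2 * i) * β i j -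
        ((n : ℂ) - i) * β (i + 1) j) := by
    intro j hj
    have hj' : j ≤ n := by simpa [Nat.lt_succ_iff] using hj
    have := congrArg (fun p => Polynomial.coeff p j) hd
    simpa only [Polynomial.coeff_derivative, Polynomial.coeff_C_mul, Polynomial.coeff_add,
      Polynomial.coeff_sub, hc, if_pos hj'] using this
  have hL : ∑ j ∈ Finset.Icc 1 n, (j : ℂ) * β i j * f (j - 1) =
      ∑ j ∈ Finset.range (n + 1),
        (if j + 1 ≤ n then β i (j + 1) else 0) * ((j : ℂ) + 1) * f j := by
    rw [Finset.sum_range_succ, if_neg (by omega), Finset.range_eq_Ico,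
      ← Finset.Ico_add_one_right_eq_Icc,
      ← Finset.sum_Ico_add' (fun j : ℕ => (j : ℂ) * β i j * f (j - 1)) 0 n 1]
    simp only [zero_mul, add_zero]
    refine Finset.sum_congr rfl fun j hj => ?_
    rw [if_pos (by have := (Finset.mem_Ico.mp hj).2; omega)]
    rw [Nat.add_sub_cancel]
    push_cast
    ring
  rw [hL, hh (i - 1) (by omega), hh i (by omega), hh (i + 1) (by omega)]
  simp only [Finset.mul_sum, ← Finset.sum_add_distrib, ← Finset.sum_sub_distrib]
  refine Finset.sum_congr rfl fun j hj => ?_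
  rw [hcoeff j hj]
  ring
end

section
/- With the notation of the context, for every i with 0 ≤ i ≤ n one has Σ_{j=0}^{n} β_{ij}^{n}·(n−2j)·f_j = −(n−i)·h_{i+1} − i·h_{i−1}, where at i = 0 the term i·h_{i−1} is 0 and at i = n the term (n−i)·h_{i+1} is 0 (so h_{−1}, h_{n+1} never occur). -/
/-!
Put `u = x₁ + √−1 x₂`, `v = x₁ - √−1 x₂`. The operator `x₂ ∂₂ - x₁ ∂₁` multiplies the monomial
`x₁ ^ j x₂ ^ (n - j)` by `n - 2 j`, and it sends `u` to `-v` and `v` to `-u`. Applying this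
derivation to `u ^ i v ^ (n - i)` therefore gives `-(n - i) u ^ (i + 1) v ^ (n - i - 1) -
i u ^ (i - 1) v ^ (n - i + 1)`, and comparing coefficients yields
`β i j (n - 2 j) = -(n - i) β (i + 1) j - i β (i - 1) j`; the theorem is the pairing of this
recurrence with `f`.

The proof works with the dehomogenization `x₂ = 1`, where on polynomials of degree at most `n`
the operator becomes `n - 2 X d/dX` (`basis_derivation`); the recurrence is `beta_recurrence`.
-/

open Finset Complex

open Polynomial in
/-- The image of `u ^ a v ^ b` under `x₂ ∂₂ - x₁ ∂₁`, at `x₂ = 1` and in degree `a + b`. -/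
lemma basis_derivation (a b : ℕ) :
    ((a + b : ℕ) : ℂ[X]) * ((X + C I) ^ a * (X - C I) ^ b)
        - 2 * X * derivative ((X + C I) ^ a * (X - C I) ^ b) =
      -((b : ℂ[X]) * ((X + C I) ^ (a + 1) * (X - C I) ^ (b - 1)))
        - (a : ℂ[X]) * ((X + C I) ^ (a - 1) * (X - C I) ^ (b + 1)) := by
  have hX : (2 : ℂ[X]) * X = (X + C I) + (X - C I) := by ring
  rw [hX]
  simp only [derivative_mul, derivative_pow, derivative_add, derivative_sub, derivative_X,
    derivative_C, add_zero, sub_zero, mul_one, map_natCast]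
  generalize (X + C I : ℂ[X]) = u
  generalize (X - C I : ℂ[X]) = v
  rcases a with _ | a <;> rcases b with _ | b <;> push_cast <;> ring

open Polynomial in
/-- The defining identity of `β`, at `x₂ = 1`, as an identity of polynomials. -/
lemma basis_eq_sum (n : ℕ) (β : ℕ → ℕ → ℂ)
    (hβ : ∀ i ≤ n, ∀ x₁ x₂ : ℂ,
      (x₁ + Complex.I * x₂) ^ i * (x₁ - Complex.I * x₂) ^ (n - i) =
        ∑ j ∈ Finset.range (n + 1), β i j * x₁ ^ j * x₂ ^ (n - j))
    (i : ℕ) (hi : i ≤ n) :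
    (X + C I) ^ i * (X - C I) ^ (n - i) = ∑ j ∈ Finset.range (n + 1), C (β i j) * X ^ j := by
  apply Polynomial.funext
  intro x
  simpa [eval_finsetSum] using hβ i hi x 1

open Polynomial in
lemma coeff_basis (n : ℕ) (β : ℕ → ℕ → ℂ)
    (hβ : ∀ i ≤ n, ∀ x₁ x₂ : ℂ,
      (x₁ + Complex.I * x₂) ^ i * (x₁ - Complex.I * x₂) ^ (n - i) =
        ∑ j ∈ Finset.range (n + 1), β i j * x₁ ^ j * x₂ ^ (n - j))
    (i : ℕ) (hi : i ≤ n) (j : ℕ) (hj : j ≤ n) :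
    ((X + C I) ^ i * (X - C I) ^ (n - i)).coeff j = β i j := by
  rw [basis_eq_sum n β hβ i hi, finsetSum_coeff]
  simp only [coeff_C_mul_X_pow]
  rw [Finset.sum_ite_eq, if_pos (Finset.mem_range.2 (by omega))]

open Polynomial in
/-- The recurrence is the comparison of `j`-th coefficients in `basis_derivation`. At `i = n` and
at `i = 0` the out-of-range values `β (n + 1) j` and `β (0 - 1) j` have coefficient `0`. -/
lemma beta_recurrence (n : ℕ) (β : ℕ → ℕ → ℂ)
    (hβ : ∀ i ≤ n, ∀ x₁ x₂ : ℂ,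
      (x₁ + Complex.I * x₂) ^ i * (x₁ - Complex.I * x₂) ^ (n - i) =
        ∑ j ∈ Finset.range (n + 1), β i j * x₁ ^ j * x₂ ^ (n - j))
    (i : ℕ) (hi : i ≤ n) (j : ℕ) (hj : j ≤ n) :
    β i j * ((n : ℂ) - 2 * j) =
      -(((n : ℂ) - i) * β (i + 1) j) - (i : ℂ) * β (i - 1) j := by
  have hD (p : ℂ[X]) : (2 * X * derivative p).coeff j = 2 * (j * p.coeff j) := by
    rw [mul_assoc, ← C_ofNat, coeff_C_mul]
    rcases j with _ | j
    · simp
    · rw [coeff_X_mul, coeff_derivative]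
      push_cast
      ring
  have key := congrArg (fun p => coeff p j) (basis_derivation i (n - i))
  simp only [coeff_sub, coeff_neg, hD, coeff_natCast_mul] at key
  rw [Nat.add_sub_cancel' hi, coeff_basis n β hβ i hi j hj, Nat.cast_sub hi] at key
  have h_up : ((n : ℂ) - i) * ((X + C I) ^ (i + 1) * (X - C I) ^ (n - i - 1)).coeff j =
      ((n : ℂ) - i) * β (i + 1) j := by
    rcases hi.eq_or_lt with rfl | hlt
    · simp
    · rw [Nat.sub_sub, coeff_basis n β hβ (i + 1) hlt j hj]
  have h_down : (i : ℂ) * ((X + C I) ^ (i - 1) * (X - C I) ^ (n - i + 1)).coeff j =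
      (i : ℂ) * β (i - 1) j := by
    rcases Nat.eq_zero_or_pos i with rfl | hpos
    · simp
    · rw [show n - i + 1 = n - (i - 1) by omega, coeff_basis n β hβ (i - 1) (by omega) j hj]
  rw [h_up, h_down] at key
  linear_combination key

/-- With `β_{ij}^n` defined by
`(x₁+√−1·x₂)^i (x₁−√−1·x₂)^{n−i} = Σ_j β_{ij}^n x₁^j x₂^{n−j}` and
`h_i = Σ_j β_{ij}^n f_j`, one has for all `0 ≤ i ≤ n`
`Σ_{j=0}^{n} β_{ij}^{n} (n−2j) f_j = −(n−i) h_{i+1} − i h_{i−1}`.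
(At `i = 0` the term `i·h_{i−1}` vanishes and at `i = n` the term `(n−i)·h_{i+1}`
vanishes, so `h_{−1}`, `h_{n+1}` never occur.) -/
theorem beta_lemma_three (n : ℕ) (hn : 1 ≤ n) (β : ℕ → ℕ → ℂ) (f h : ℕ → ℂ)
    (hβ : ∀ i ≤ n, ∀ x₁ x₂ : ℂ,
      (x₁ + Complex.I * x₂) ^ i * (x₁ - Complex.I * x₂) ^ (n - i) =
        ∑ j ∈ Finset.range (n + 1), β i j * x₁ ^ j * x₂ ^ (n - j))
    (hh : ∀ i ≤ n, h i = ∑ j ∈ Finset.range (n + 1), β i j * f j) :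
    ∀ i ≤ n,
      ∑ j ∈ Finset.range (n + 1), β i j * ((n : ℂ) - 2 * j) * f j =
        -(((n : ℂ) - i) * h (i + 1)) - (i : ℂ) * h (i - 1) := by
  intro i hi
  have h_up : ((n : ℂ) - i) * h (i + 1) =
      ((n : ℂ) - i) * ∑ j ∈ Finset.range (n + 1), β (i + 1) j * f j := by
    rcases hi.eq_or_lt with rfl | hlt
    · simp
    · rw [hh (i + 1) hlt]
  rw [h_up, hh (i - 1) (by omega), Finset.mul_sum, Finset.mul_sum, ← Finset.sum_neg_distrib,
    ← Finset.sum_sub_distrib]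
  refine Finset.sum_congr rfl fun j hj => ?_
  have hj' : j ≤ n := Nat.lt_succ_iff.1 (Finset.mem_range.1 hj)
  linear_combination f j * beta_recurrence n β hβ i hi j hj'
end

section
/- With the notation of the context, for every i with 0 ≤ i ≤ n−1 one has Σ_{j=0}^{n−1} (n−j)·β_{ij}^{n}·f_{j+1} = (√−1/2) · ( i·h_{i−1} − (n−2i)·h_i − (n−i)·h_{i+1} ), where at i = 0 the term i·h_{i−1} is 0 (so h_{−1} never occurs). -/
/-!
Write `z = x₁ + i x₂`, `w = x₁ - i x₂` and `P_i = z ^ i * w ^ (n - i)`. The operator `x₁ ∂/∂x₂` sends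
`x₁ ^ j x₂ ^ (n - j)` to `(n - j) x₁ ^ (j + 1) x₂ ^ (n - j - 1)`, so the left-hand side is the linear
functional `x₁ ^ j x₂ ^ (n - j) ↦ f j` evaluated at `x₁ ∂P_i/∂x₂`. Since `x₁ = (z + w) / 2`,
`∂z/∂x₂ = i` and `∂w/∂x₂ = -i`, the product rule expresses `x₁ ∂P_i/∂x₂` through
`P_{i-1}`, `P_i`, `P_{i+1}`, and applying the functional gives the claim.

The proof is carried out after dehomogenizing at `x₂ = 1`, where `x₁ ∂/∂x₂` becomes
`p ↦ X (n p - X p')` by Euler's identity; the product rule is `betaPoly_identity`.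
-/

open Finset Complex

open Polynomial in
/-- The dehomogenization `(X + i) ^ i * (X - i) ^ (n - i)` of the `i`-th form, at `x₂ = 1`. -/
noncomputable def betaPoly (n i : ℕ) : ℂ[X] := (X + C I) ^ i * (X - C I) ^ (n - i)

/-- At `x₂ = 1` the defining identity holds for all `x₁`, hence as an identity of polynomials. -/
theorem betaPoly_coeff (n : ℕ) (β : ℕ → ℕ → ℂ)
    (hβ : ∀ i ≤ n, ∀ x₁ x₂ : ℂ,
      (x₁ + Complex.I * x₂) ^ i * (x₁ - Complex.I * x₂) ^ (n - i) =
        ∑ j ∈ Finset.range (n + 1), β i j * x₁ ^ j * x₂ ^ (n - j))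
    (i : ℕ) (hi : i ≤ n) (j : ℕ) (hj : j ≤ n) : (betaPoly n i).coeff j = β i j := by
  have key : betaPoly n i =
      ∑ j ∈ Finset.range (n + 1), Polynomial.C (β i j) * Polynomial.X ^ j := by
    apply Polynomial.funext
    intro x
    simpa [betaPoly, Polynomial.eval_finsetSum] using hβ i hi x 1
  rw [key, Polynomial.finsetSum_coeff]
  simp [Polynomial.coeff_C_mul, Polynomial.coeff_X_pow, hj]

open Polynomial in
/-- The product rule for `x₁ ∂/∂x₂`, dehomogenized at `x₂ = 1`. -/
theorem betaPoly_identity (n i : ℕ) (hi : i + 1 ≤ n) :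
    X * (C (n : ℂ) * betaPoly n i - X * derivative (betaPoly n i)) =
      C (I / 2) * (C (i : ℂ) * betaPoly n (i - 1) - C ((n : ℂ) - 2 * i) * betaPoly n i
        - C ((n : ℂ) - i) * betaPoly n (i + 1)) := by
  obtain ⟨m, rfl⟩ := Nat.exists_eq_add_of_le hi
  apply Polynomial.funext
  intro x
  have e1 : i + 1 + m - i = m + 1 := by omega
  have e2 : i + 1 + m - (i + 1) = m := by omega
  have hI : I ^ 2 = -1 := I_sq
  rcases i with _ | k
  · simp only [betaPoly, e1, e2]
    simp [derivative_pow]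
    grind
  · have e3 : k + 1 + 1 + m - k = m + 2 := by omega
    simp only [betaPoly, e1, e2, Nat.add_sub_cancel, e3]
    simp [derivative_pow]
    grind

/-- With `β_{ij}^n` defined by
`(x₁+√−1·x₂)^i (x₁−√−1·x₂)^{n−i} = Σ_j β_{ij}^n x₁^j x₂^{n−j}` and
`h_i = Σ_j β_{ij}^n f_j`, one has for all `0 ≤ i ≤ n−1`
`Σ_{j=0}^{n−1} (n−j) β_{ij}^{n} f_{j+1} = (√−1/2)(i h_{i−1} − (n−2i) h_i − (n−i) h_{i+1})`.
(At `i = 0` the term `i·h_{i−1}` vanishes, so `h_{−1}` never occurs.) -/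
theorem beta_lemma_four (n : ℕ) (hn : 1 ≤ n) (β : ℕ → ℕ → ℂ) (f h : ℕ → ℂ)
    (hβ : ∀ i ≤ n, ∀ x₁ x₂ : ℂ,
      (x₁ + Complex.I * x₂) ^ i * (x₁ - Complex.I * x₂) ^ (n - i) =
        ∑ j ∈ Finset.range (n + 1), β i j * x₁ ^ j * x₂ ^ (n - j))
    (hh : ∀ i ≤ n, h i = ∑ j ∈ Finset.range (n + 1), β i j * f j) :
    ∀ i ≤ n - 1,
      ∑ j ∈ Finset.range n, ((n : ℂ) - j) * β i j * f (j + 1) =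
        (Complex.I / 2) *
          ((i : ℂ) * h (i - 1) - ((n : ℂ) - 2 * i) * h i - ((n : ℂ) - i) * h (i + 1)) := by
  intro i hi
  have hi' : i + 1 ≤ n := by omega
  have hc := betaPoly_coeff n β hβ
  -- the coefficient of `X ^ j` in the polynomial identity, for `j ≤ n`
  have hcoeff : ∀ j ≤ n,
      (Polynomial.X * (Polynomial.C (n : ℂ) * betaPoly n i
        - Polynomial.X * Polynomial.derivative (betaPoly n i))).coeff j =
      (I / 2) * ((i : ℂ) * β (i - 1) j - ((n : ℂ) - 2 * i) * β i j
        - ((n : ℂ) - i) * β (i + 1) j) := by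
    intro j hj
    rw [betaPoly_identity n i hi']
    simp only [Polynomial.coeff_C_mul, Polynomial.coeff_sub]
    rw [hc (i - 1) (by omega) j hj, hc i (by omega) j hj, hc (i + 1) hi' j hj]
  have hleft : ∀ j < n, (Polynomial.X * (Polynomial.C (n : ℂ) * betaPoly n i
        - Polynomial.X * Polynomial.derivative (betaPoly n i))).coeff (j + 1) =
      ((n : ℂ) - j) * β i j := by
    intro j hj
    rw [Polynomial.coeff_X_mul, Polynomial.coeff_sub, Polynomial.coeff_C_mul,
      hc i (by omega) j hj.le]
    rcases j with _ | j
    · simp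
    · rw [Polynomial.coeff_X_mul, Polynomial.coeff_derivative, hc i (by omega) _ hj.le]
      push_cast
      ring
  calc ∑ j ∈ Finset.range n, ((n : ℂ) - j) * β i j * f (j + 1)
      = ∑ j ∈ Finset.range (n + 1), (Polynomial.X * (Polynomial.C (n : ℂ) * betaPoly n i
          - Polynomial.X * Polynomial.derivative (betaPoly n i))).coeff j * f j := by
        rw [Finset.sum_range_succ', Polynomial.coeff_X_mul_zero, zero_mul, add_zero]
        exact Finset.sum_congr rfl fun j hj => by rw [hleft j (Finset.mem_range.mp hj)]
    _ = ∑ j ∈ Finset.range (n + 1), (I / 2) * ((i : ℂ) * (β (i - 1) j * f j)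
          - ((n : ℂ) - 2 * i) * (β i j * f j) - ((n : ℂ) - i) * (β (i + 1) j * f j)) :=
        Finset.sum_congr rfl fun j hj => by
          rw [hcoeff j (Nat.lt_succ_iff.mp (Finset.mem_range.mp hj))]
          ring
    _ = _ := by
        rw [hh (i - 1) (by omega), hh i (by omega), hh (i + 1) hi']
        simp only [← Finset.mul_sum, Finset.sum_sub_distrib]
end

section
/- With the notation of the context, for every i with 0 ≤ i ≤ n−2 the two identities hold: Σ_{j=0}^{n−2} β_{ij}^{n−2}·f_j = −(1/4)(h_i + h_{i+2}) + (1/2)·h_{i+1}, and Σ_{j=0}^{n−2} β_{ij}^{n−2}·f_{j+2} = (1/4)(h_i + h_{i+2}) + (1/2)·h_{i+1}. -/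
/-!
Setting `x₂ = 1` turns the defining identity of the `β m i j` into the polynomial identity
`∑ j, β m i j X ^ j = (X + √−1) ^ i (X - √−1) ^ (m - i)` (`betaPoly_eq`). Apply the linear functional
`X ^ j ↦ f j` (`momentFunctional`): the right-hand side for `m = n` becomes `h i`, and the
two sums over `j ≤ n - 2` are the values of the functional at `P` and at `X ^ 2 * P`, where
`P = (X + √−1) ^ i (X - √−1) ^ (n - 2 - i)`. With `a = X + √−1` and `b = X - √−1`, the result is then
the image of the elementary identities `1 = -(a² + b²) / 4 + a b / 2` and
`X² = (a² + b²) / 4 + a b / 2`, multiplied by `P`.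
-/

open Finset Complex

namespace BetaLemma

open Polynomial

/-- The linear functional on `ℂ[X]` sending `X ^ j` to `f j`. -/
noncomputable def momentFunctional (f : ℕ → ℂ) : ℂ[X] →ₗ[ℂ] ℂ :=
  Polynomial.lsum fun j => LinearMap.mulRight ℂ (f j)

lemma momentFunctional_C_mul_X_pow (f : ℕ → ℂ) (a : ℂ) (j : ℕ) :
    momentFunctional f (C a * X ^ j) = a * f j := by
  rw [C_mul_X_pow_eq_monomial]
  simp [momentFunctional, Polynomial.lsum_apply, Polynomial.sum_monomial_index]

/-- A polynomial over the infinite field `ℂ` is determined by its values, so the pointwise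
identity at `x₂ = 1` lifts to `ℂ[X]`. -/
lemma betaPoly_eq (b : ℕ → ℂ) (m i : ℕ)
    (hb : ∀ x₁ x₂ : ℂ, (x₁ + Complex.I * x₂) ^ i * (x₁ - Complex.I * x₂) ^ (m - i) =
      ∑ j ∈ Finset.range (m + 1), b j * x₁ ^ j * x₂ ^ (m - j)) :
    ∑ j ∈ Finset.range (m + 1), C (b j) * X ^ j =
      (X + C Complex.I) ^ i * (X - C Complex.I) ^ (m - i) := by
  apply Polynomial.funext
  intro x
  have := hb x 1
  simp only [mul_one, one_pow] at this
  simp [Polynomial.eval_finsetSum, this]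

end BetaLemma

/-- With `β_{ij}^m` defined for every `m ≥ 0` by
`(x₁+√−1·x₂)^i (x₁−√−1·x₂)^{m−i} = Σ_j β_{ij}^m x₁^j x₂^{m−j}` and
`h_i = Σ_j β_{ij}^n f_j`, one has for all `0 ≤ i ≤ n−2` the two identities
`Σ_{j=0}^{n−2} β_{ij}^{n−2} f_j = −(1/4)(h_i + h_{i+2}) + (1/2) h_{i+1}` and
`Σ_{j=0}^{n−2} β_{ij}^{n−2} f_{j+2} = (1/4)(h_i + h_{i+2}) + (1/2) h_{i+1}`. -/
theorem beta_lemma_five (n : ℕ) (hn : 2 ≤ n) (β : ℕ → ℕ → ℕ → ℂ) (f h : ℕ → ℂ)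
    (hβ : ∀ m : ℕ, ∀ i ≤ m, ∀ x₁ x₂ : ℂ,
      (x₁ + Complex.I * x₂) ^ i * (x₁ - Complex.I * x₂) ^ (m - i) =
        ∑ j ∈ Finset.range (m + 1), β m i j * x₁ ^ j * x₂ ^ (m - j))
    (hh : ∀ i ≤ n, h i = ∑ j ∈ Finset.range (n + 1), β n i j * f j) :
    ∀ i ≤ n - 2,
      (∑ j ∈ Finset.range (n - 2 + 1), β (n - 2) i j * f j =
        -(1 / 4 : ℂ) * (h i + h (i + 2)) + (1 / 2 : ℂ) * h (i + 1)) ∧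
      (∑ j ∈ Finset.range (n - 2 + 1), β (n - 2) i j * f (j + 2) =
        (1 / 4 : ℂ) * (h i + h (i + 2)) + (1 / 2 : ℂ) * h (i + 1)) := by
  obtain ⟨m, rfl⟩ : ∃ m, n = m + 2 := ⟨n - 2, by omega⟩
  intro i hi
  simp only [Nat.add_sub_cancel] at hi ⊢
  set L := BetaLemma.momentFunctional f with hL
  have hH : ∀ k ≤ m + 2, h k = L ((Polynomial.X + Polynomial.C Complex.I) ^ k *
      (Polynomial.X - Polynomial.C Complex.I) ^ (m + 2 - k)) := by
    intro k hk
    rw [hh k hk, ← BetaLemma.betaPoly_eq (β (m + 2) k) (m + 2) k (hβ _ k hk), map_sum]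
    simp only [hL, BetaLemma.momentFunctional_C_mul_X_pow]
  have hP := BetaLemma.betaPoly_eq (β m i) m i (hβ m i hi)
  have hS : ∑ j ∈ Finset.range (m + 1), β m i j * f j =
      L ((Polynomial.X + Polynomial.C Complex.I) ^ i *
        (Polynomial.X - Polynomial.C Complex.I) ^ (m - i)) := by
    rw [← hP, map_sum]
    simp only [hL, BetaLemma.momentFunctional_C_mul_X_pow]
  have hS2 : ∑ j ∈ Finset.range (m + 1), β m i j * f (j + 2) =
      L (((Polynomial.X + Polynomial.C Complex.I) ^ i *
        (Polynomial.X - Polynomial.C Complex.I) ^ (m - i)) * Polynomial.X ^ 2) := by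
    rw [← hP, Finset.sum_mul, map_sum]
    simp only [mul_assoc, ← pow_add, hL, BetaLemma.momentFunctional_C_mul_X_pow]
  have hI : (Polynomial.C Complex.I) ^ 2 = (-1 : Polynomial ℂ) := by
    rw [← Polynomial.C_pow, Complex.I_sq]; simp
  have h4 : Polynomial.C (1 / 4 : ℂ) * 4 = 1 := by
    rw [← Polynomial.C_ofNat, ← Polynomial.C_mul]; norm_num
  have h2 : Polynomial.C (1 / 2 : ℂ) = 2 * Polynomial.C (1 / 4 : ℂ) := by
    rw [← Polynomial.C_ofNat, ← Polynomial.C_mul]; norm_num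
  rw [hS, hS2, hH i (by omega), hH (i + 1) (by omega), hH (i + 2) (by omega),
    show m + 2 - i = m - i + 2 by omega, show m + 2 - (i + 1) = m - i + 1 by omega,
    show m + 2 - (i + 2) = m - i by omega]
  simp only [← smul_eq_mul (α := ℂ), ← map_add, ← map_smul]
  simp only [Polynomial.smul_eq_C_mul, Polynomial.C_neg, h2]
  generalize Polynomial.C (1 / 4 : ℂ) = q at *
  generalize Polynomial.C Complex.I = w at *
  generalize m - i = k
  constructor
  · congr 1
    -- Here `2 * a * b - a² - b² = -(a - b)² = -4 * w²`, where `w² = -1` and `4 * q = 1`.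
    linear_combination (4 * q * hI - h4) * ((Polynomial.X + w) ^ i * (Polynomial.X - w) ^ k)
  · congr 1
    -- Here `2 * a * b + a² + b² = (a + b)² = 4 * X²`.
    linear_combination (-h4) * ((Polynomial.X + w) ^ i * (Polynomial.X - w) ^ k *
      Polynomial.X ^ 2)
end

section
/- With the notation of the context, for every i with 0 ≤ i ≤ n−2 one has Σ_{j=0}^{n−2} β_{ij}^{n−2}·f_{j+1} = (1/(4√−1)) · (h_{i+2} − h_i). -/
open Finset Complex

/-!
Write `u = x₁ + I x₂` and `v = x₁ - I x₂`. Since `u² - v² = 4 I x₁ x₂`,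
`u^(i+2) v^(n-2-i) - u^i v^(n-i) = 4 I x₁ x₂ · u^i v^(n-2-i)`.
Setting `x₂ = 1` and comparing coefficients of powers of `x₁` gives
`β n (i+2) j - β n i j = 4 I β (n-2) i (j-1)`, where the right-hand side is `0` for `j = 0` and
`j = n`. Multiplying by `f j` and summing over `j` yields the claim.
-/

open Polynomial in
/-- The polynomial whose coefficients are row `i` of the array `β m`. For `β` as in the theorem and
`i ≤ m` it equals `(X + I)^i (X - I)^(m-i)`, the defining product dehomogenized at `x₂ = 1`. -/
noncomputable def rowPoly (β : ℕ → ℕ → ℕ → ℂ) (m i : ℕ) : ℂ[X] :=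
  ∑ j ∈ Finset.range (m + 1), C (β m i j) * X ^ j

lemma rowPoly_coeff (β : ℕ → ℕ → ℕ → ℂ) (m i k : ℕ) :
    (rowPoly β m i).coeff k = if k < m + 1 then β m i k else 0 := by
  simp [rowPoly, Polynomial.finsetSum_coeff, Polynomial.coeff_C_mul, Polynomial.coeff_X_pow]

/-- With `β_{ij}^m` defined for every `m ≥ 0` by
`(x₁+√−1·x₂)^i (x₁−√−1·x₂)^{m−i} = Σ_j β_{ij}^m x₁^j x₂^{m−j}` and
`h_i = Σ_j β_{ij}^n f_j`, one has for all `0 ≤ i ≤ n−2`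
`Σ_{j=0}^{n−2} β_{ij}^{n−2} f_{j+1} = (1/(4√−1)) (h_{i+2} − h_i)`. -/
theorem beta_lemma_six (n : ℕ) (hn : 2 ≤ n) (β : ℕ → ℕ → ℕ → ℂ) (f h : ℕ → ℂ)
    (hβ : ∀ m : ℕ, ∀ i ≤ m, ∀ x₁ x₂ : ℂ,
      (x₁ + Complex.I * x₂) ^ i * (x₁ - Complex.I * x₂) ^ (m - i) =
        ∑ j ∈ Finset.range (m + 1), β m i j * x₁ ^ j * x₂ ^ (m - j))
    (hh : ∀ i ≤ n, h i = ∑ j ∈ Finset.range (n + 1), β n i j * f j) :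
    ∀ i ≤ n - 2,
      ∑ j ∈ Finset.range (n - 2 + 1), β (n - 2) i j * f (j + 1) =
        (1 / (4 * Complex.I)) * (h (i + 2) - h i) := by
  obtain ⟨m, rfl⟩ : ∃ m, n = m + 2 := ⟨n - 2, by omega⟩
  simp only [Nat.add_sub_cancel]
  intro i hi
  have heval : ∀ m i, i ≤ m → ∀ x : ℂ, (rowPoly β m i).eval x =
      (x + I) ^ i * (x - I) ^ (m - i) := by
    intro m i hi x
    have := hβ m i hi x 1
    simp only [mul_one, one_pow] at this
    rw [this]
    simp [rowPoly, Polynomial.eval_finsetSum]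
  have hpoly : rowPoly β (m + 2) (i + 2) - rowPoly β (m + 2) i =
      Polynomial.C (4 * I) * (rowPoly β m i * Polynomial.X) := by
    apply Polynomial.funext
    intro x
    rw [Polynomial.eval_sub, heval _ _ (by omega), heval _ _ (by omega), Polynomial.eval_mul,
      Polynomial.eval_mul, heval _ _ hi, Polynomial.eval_C, Polynomial.eval_X,
      show m + 2 - (i + 2) = m - i by omega, show m + 2 - i = m - i + 2 by omega]
    ring
  have hzero : β (m + 2) (i + 2) 0 - β (m + 2) i 0 = 0 := by
    have := congrArg (fun p => p.coeff 0) hpoly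
    simpa [rowPoly_coeff] using this
  have hsucc : ∀ j, j < m + 2 → β (m + 2) (i + 2) (j + 1) - β (m + 2) i (j + 1) =
      4 * I * if j < m + 1 then β m i j else 0 := by
    intro j hj
    have := congrArg (fun p => p.coeff (j + 1)) hpoly
    simp only [Polynomial.coeff_sub, Polynomial.coeff_C_mul, Polynomial.coeff_mul_X,
      rowPoly_coeff] at this
    rwa [if_pos (by omega), if_pos (by omega)] at this
  have hdiff : h (i + 2) - h i = 4 * I * ∑ j ∈ Finset.range (m + 1), β m i j * f (j + 1) := by
    rw [hh _ (by omega), hh _ (by omega), ← Finset.sum_sub_distrib]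
    simp only [← sub_mul]
    rw [Finset.sum_range_succ', hzero, zero_mul, add_zero, Finset.sum_range_succ,
      hsucc (m + 1) (by omega), if_neg (by omega), mul_zero, zero_mul, add_zero, Finset.mul_sum]
    refine Finset.sum_congr rfl fun j hj => ?_
    have hj' := Finset.mem_range.mp hj
    rw [hsucc j (by omega), if_pos hj', mul_assoc]
  rw [hdiff, ← mul_assoc, one_div_mul_cancel (by simp), one_mul]
end

section
/- With the notation of the context, for every i with 0 ≤ i ≤ n−2 one has Σ_{j=0}^{n−2} β_{ij}^{n−2} · ( −j·f_j + (n−j−2)·f_{j+2} ) = (1/4)·(−n+2i+2)·(h_{i+2} − h_i). -/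
/-!
Set `x₂ = 1` and put `P_{m,i} = (X + I)^i (X - I)^(m-i)`, so that `P_{m,i} = ∑ⱼ β_{ij}^m X^j`.
Let `L` be the linear functional on `ℂ[X]` with `L (X^j) = f_j`; then `h_i = L P_{n,i}`.
With `m = n - 2` and `P = P_{m,i}`, the left-hand side of the theorem is `L` applied to
`-X P' + X² (m P - X P') = X (m X P - (X² + 1) P')`.
Logarithmic differentiation (`sq_add_one_mul_derivative`) gives
`(X² + 1) P' = (m X + I (m - 2 i)) P`, so this polynomial is `I (2 i - m) X P`. Finally
`4 I X = (X + I)² - (X - I)²` turns it into `(1/4) (2 i - m) (P_{n,i+2} - P_{n,i})`.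
-/

open Finset Complex

open Polynomial in
/-- The differential equation satisfied by `(X + I)^i (X - I)^k`; it is the dehomogenised form of
the fact that this product is an eigenvector of the rotation field `x₁∂₂ - x₂∂₁`. -/
lemma sq_add_one_mul_derivative (i k : ℕ) :
    ((X : ℂ[X]) ^ 2 + 1) * derivative ((X + C I) ^ i * (X - C I) ^ k) =
      (((i : ℂ[X]) + (k : ℂ[X])) * X + C I * ((k : ℂ[X]) - (i : ℂ[X]))) * ((X + C I) ^ i * (X - C I) ^ k) := by
  have hI : (C I : ℂ[X]) * C I = -1 := by rw [← C_mul, I_mul_I]; simp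
  have h₁ : (X + C I) * derivative ((X + C I : ℂ[X]) ^ i) = (i : ℂ[X]) * (X + C I) ^ i := by
    cases i with
    | zero => simp
    | succ i => simp [derivative_pow]; ring
  have h₂ : (X - C I) * derivative ((X - C I : ℂ[X]) ^ k) = (k : ℂ[X]) * (X - C I) ^ k := by
    cases k with
    | zero => simp
    | succ k => simp [derivative_pow]; ring
  have hf : (X : ℂ[X]) ^ 2 + 1 = (X + C I) * (X - C I) := by linear_combination hI
  rw [derivative_mul, hf]
  linear_combination (X - C I) * (X - C I) ^ k * h₁ + (X + C I) * (X + C I) ^ i * h₂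

/-- With `β_{ij}^m` defined for every `m ≥ 0` by
`(x₁+√−1·x₂)^i (x₁−√−1·x₂)^{m−i} = Σ_j β_{ij}^m x₁^j x₂^{m−j}` and
`h_i = Σ_j β_{ij}^n f_j`, one has for all `0 ≤ i ≤ n−2`
`Σ_{j=0}^{n−2} β_{ij}^{n−2} (−j f_j + (n−j−2) f_{j+2}) = (1/4)(−n+2i+2)(h_{i+2} − h_i)`. -/
theorem beta_lemma_seven (n : ℕ) (hn : 2 ≤ n) (β : ℕ → ℕ → ℕ → ℂ) (f h : ℕ → ℂ)
    (hβ : ∀ m : ℕ, ∀ i ≤ m, ∀ x₁ x₂ : ℂ,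
      (x₁ + Complex.I * x₂) ^ i * (x₁ - Complex.I * x₂) ^ (m - i) =
        ∑ j ∈ Finset.range (m + 1), β m i j * x₁ ^ j * x₂ ^ (m - j))
    (hh : ∀ i ≤ n, h i = ∑ j ∈ Finset.range (n + 1), β n i j * f j) :
    ∀ i ≤ n - 2,
      ∑ j ∈ Finset.range (n - 2 + 1), β (n - 2) i j *
          (-(j : ℂ) * f j + ((n : ℂ) - j - 2) * f (j + 2)) =
        (1 / 4 : ℂ) * (-(n : ℂ) + 2 * i + 2) * (h (i + 2) - h i) := by
  intro i hi
  obtain ⟨k, rfl⟩ : ∃ k, n = i + k + 2 := ⟨n - 2 - i, by omega⟩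
  have hm : i + k + 2 - 2 = i + k := by omega
  rw [hm]
  -- The defining identity at `x₂ = 1`, as an identity of polynomials.
  have hP : ∀ m : ℕ, ∀ i ≤ m, ((Polynomial.X + Polynomial.C I) ^ i *
      (Polynomial.X - Polynomial.C I) ^ (m - i) : Polynomial ℂ) =
        ∑ j ∈ range (m + 1), Polynomial.C (β m i j) * Polynomial.X ^ j := by
    intro m i hi
    refine Polynomial.funext fun x => ?_
    simpa [Polynomial.eval_finsetSum] using hβ m i hi x 1
  -- The functional `L` with `L (X ^ j) = f j`.
  obtain ⟨L, hL⟩ : ∃ L : Polynomial ℂ →ₗ[ℂ] ℂ,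
      ∀ a j, L (Polynomial.C a * Polynomial.X ^ j) = a * f j := by
    refine ⟨Polynomial.lsum fun j => LinearMap.mulRight ℂ (f j), fun a j => ?_⟩
    simp [Polynomial.lsum_apply, Polynomial.C_mul_X_pow_eq_monomial,
      Polynomial.sum_monomial_index]
  have hLh : ∀ l ≤ i + k + 2, h l = L ((Polynomial.X + Polynomial.C I) ^ l *
      (Polynomial.X - Polynomial.C I) ^ (i + k + 2 - l)) := by
    intro l hl
    rw [hP _ l hl, map_sum, hh l hl]
    simp only [hL]
  have hPi := hP (i + k) i (by omega)
  rw [Nat.add_sub_cancel_left] at hPi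
  have hode := sq_add_one_mul_derivative i k
  have h₂ := hLh (i + 2) (by omega)
  have h₀ := hLh i (by omega)
  rw [show i + k + 2 - (i + 2) = k by omega] at h₂
  rw [show i + k + 2 - i = k + 2 by omega] at h₀
  rw [h₂, h₀, ← map_sub, ← smul_eq_mul, ← map_smul]
  set P : Polynomial ℂ := (Polynomial.X + Polynomial.C I) ^ i *
    (Polynomial.X - Polynomial.C I) ^ k with hPdef
  -- The left-hand side is `L` of the polynomial obtained by putting `X ^ j` for `f j`.
  have hlhs : ∑ j ∈ range (i + k + 1), β (i + k) i j *
        (-(j : ℂ) * f j + (((i + k + 2 : ℕ) : ℂ) - j - 2) * f (j + 2)) =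
      L (-(Polynomial.X * Polynomial.derivative P) + Polynomial.X ^ 2 *
        (((i : Polynomial ℂ) + (k : Polynomial ℂ)) * P - Polynomial.X * Polynomial.derivative P)) := by
    have hXd : Polynomial.X * Polynomial.derivative P =
        ∑ j ∈ range (i + k + 1), Polynomial.C (β (i + k) i j * j) * Polynomial.X ^ j := by
      rw [hPi, Polynomial.derivative_sum, mul_sum]
      refine sum_congr rfl fun j _ => ?_
      cases j with
      | zero => simp
      | succ j => simp; ring
    rw [hXd, hPi, mul_sum, ← sum_sub_distrib, mul_sum, ← sum_neg_distrib, ← sum_add_distrib,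
      map_sum]
    refine sum_congr rfl fun j _ => ?_
    have : -(Polynomial.C (β (i + k) i j * j) * Polynomial.X ^ j) + Polynomial.X ^ 2 *
        (((i : Polynomial ℂ) + (k : Polynomial ℂ)) * (Polynomial.C (β (i + k) i j) * Polynomial.X ^ j) -
          Polynomial.C (β (i + k) i j * j) * Polynomial.X ^ j) =
        Polynomial.C (-(β (i + k) i j * j)) * Polynomial.X ^ j +
        Polynomial.C (β (i + k) i j * ((i : ℂ) + k - j)) * Polynomial.X ^ (j + 2) := by
      simp only [map_neg, map_mul, map_sub, map_add, map_natCast]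
      ring
    rw [this, map_add, hL, hL]
    push_cast
    ring
  rw [hlhs]
  congr 1
  have hc : (1 / 4 : ℂ) * (-((i + k + 2 : ℕ) : ℂ) + 2 * i + 2) = (1 / 4 : ℂ) * (i - k) := by
    push_cast; ring
  have h4 : (Polynomial.C (1 / 4 : ℂ)) * 4 = 1 := by
    rw [show (4 : Polynomial ℂ) = Polynomial.C 4 from rfl, ← Polynomial.C_mul]; norm_num
  rw [hc, Polynomial.smul_eq_C_mul, pow_add _ i, pow_add _ k]
  simp only [map_mul, map_sub, map_natCast]
  linear_combination (-Polynomial.X) * hode -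
    Polynomial.X * Polynomial.C I * ((i : Polynomial ℂ) - (k : Polynomial ℂ)) * P * h4
end

section
/- Let κ, μ ∈ ℂ and let f : (0,∞) → ℂ be twice differentiable and satisfy the Whittaker equation with parameters (κ,μ). Then the function g(y) := y·f'(y) − (y/2)·f(y) + κ·f(y) is twice differentiable and satisfies the Whittaker equation with parameters (κ+1, μ). (This is the raising-operator identity underlying the contiguous relation (y d/dy − y/2 + κ)W_{κ,μ} = −W_{κ+1,μ}.) -/
/-!
On `(0,∞)` write `c = 1/4 - μ²` and `q = -1/4 + κ/y + c/y²`, so that `f'' = -q f`. Although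
`g = y f' + (κ - y/2) f` involves `f'`, its first derivative is again a combination of `f` and `f'`
with smooth coefficients once `f''` is eliminated:
`g' = (κ + 1 - y/2) f' + (y/4 - κ - c/y - 1/2) f`.
Hence `g'` is differentiable without assuming a third derivative of `f`. Differentiating once more
and eliminating `f''` again, the coefficients of `f'` and of `f` in `g'' + (q + 1/y) g` both vanish.
-/

open Complex

/-- A twice-differentiable function `W : (0,∞) → ℂ` satisfies the Whittaker equation with
parameters `(κ,μ)` if `W''(y) + (−1/4 + κ/y + (1/4 − μ²)/y²)·W(y) = 0` for all `y > 0`. -/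
def SatisfiesWhittaker (κ μ : ℂ) (W : ℝ → ℂ) : Prop :=
  ∀ y : ℝ, 0 < y →
    (DifferentiableAt ℝ W y ∧ DifferentiableAt ℝ (deriv W) y) ∧
    deriv (deriv W) y +
      (-(1 / 4 : ℂ) + κ / (y : ℂ) + ((1 / 4 : ℂ) - μ ^ 2) / (y : ℂ) ^ 2) * W y = 0

/-- The Whittaker equation in solved form: the derivative of `deriv f` is a multiple of `f`. -/
lemma SatisfiesWhittaker.hasDerivAt_deriv {κ μ : ℂ} {f : ℝ → ℂ} (hf : SatisfiesWhittaker κ μ f)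
    {y : ℝ} (hy : 0 < y) :
    HasDerivAt (deriv f)
      (-((-(1 / 4 : ℂ) + κ / (y : ℂ) + ((1 / 4 : ℂ) - μ ^ 2) / (y : ℂ) ^ 2) * f y)) y := by
  obtain ⟨⟨-, h⟩, he⟩ := hf y hy
  rw [← eq_neg_of_add_eq_zero_left he]
  exact h.hasDerivAt

lemma SatisfiesWhittaker.hasDerivAt_raise {κ μ : ℂ} {f : ℝ → ℂ} (hf : SatisfiesWhittaker κ μ f)
    {y : ℝ} (hy : 0 < y) :
    HasDerivAt (fun y : ℝ => (y : ℂ) * deriv f y - ((y : ℂ) / 2) * f y + κ * f y)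
      ((κ + 1 - (y : ℂ) / 2) * deriv f y +
        ((y : ℂ) / 4 - κ - (1 / 4 - μ ^ 2) * (y : ℂ)⁻¹ - 1 / 2) * f y) y := by
  have hy0 : (y : ℂ) ≠ 0 := by exact_mod_cast hy.ne'
  have h1 := (hf y hy).1.1.hasDerivAt
  have h2 := hf.hasDerivAt_deriv hy
  have hid : HasDerivAt (fun y : ℝ => (y : ℂ)) 1 y := (hasDerivAt_id y).ofReal_comp
  refine (((hid.mul h2).sub ((hid.div_const 2).mul h1)).add (h1.const_mul κ)).congr_deriv ?_
  field_simp
  ring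

lemma SatisfiesWhittaker.hasDerivAt_deriv_raise {κ μ : ℂ} {f : ℝ → ℂ}
    (hf : SatisfiesWhittaker κ μ f) {y : ℝ} (hy : 0 < y) :
    HasDerivAt (deriv (fun y : ℝ => (y : ℂ) * deriv f y - ((y : ℂ) / 2) * f y + κ * f y))
      (-((-(1 / 4 : ℂ) + (κ + 1) / (y : ℂ) + ((1 / 4 : ℂ) - μ ^ 2) / (y : ℂ) ^ 2) *
        ((y : ℂ) * deriv f y - ((y : ℂ) / 2) * f y + κ * f y))) y := by
  have hy0 : (y : ℂ) ≠ 0 := by exact_mod_cast hy.ne'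
  have h1 := (hf y hy).1.1.hasDerivAt
  have h2 := hf.hasDerivAt_deriv hy
  have hid : HasDerivAt (fun y : ℝ => (y : ℂ)) 1 y := (hasDerivAt_id y).ofReal_comp
  have hinv : HasDerivAt (fun y : ℝ => (y : ℂ)⁻¹) (-1 / (y : ℂ) ^ 2) y := hid.inv hy0
  have hA := (hid.div_const 2).const_sub (κ + 1)
  have hB := (((hid.div_const 4).sub_const κ).sub (hinv.const_mul (1 / 4 - μ ^ 2))).sub_const
    (1 / 2)
  -- The formula for `g'` holds only on `(0,∞)`, which is a neighbourhood of `y`.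
  refine (((hA.mul h2).add (hB.mul h1)).congr_deriv ?_).congr_of_eventuallyEq ?_
  · simp only [Pi.sub_apply]
    field_simp
    ring
  · filter_upwards [lt_mem_nhds hy] with z hz using (hf.hasDerivAt_raise hz).deriv

/-- If `f` satisfies the Whittaker equation with parameters `(κ,μ)`,
then `g(y) = y·f'(y) − (y/2)·f(y) + κ·f(y)` is twice differentiable on `(0,∞)` and
satisfies the Whittaker equation with parameters `(κ+1,μ)` (raising operator). -/
theorem whittaker_raising (κ μ : ℂ) (f : ℝ → ℂ) (hf : SatisfiesWhittaker κ μ f) :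
    SatisfiesWhittaker (κ + 1) μ
      (fun y : ℝ => (y : ℂ) * deriv f y - ((y : ℂ) / 2) * f y + κ * f y) := by
  intro y hy
  have h := hf.hasDerivAt_deriv_raise hy
  refine ⟨⟨(hf.hasDerivAt_raise hy).differentiableAt, h.differentiableAt⟩, ?_⟩
  rw [h.deriv]
  exact neg_add_cancel _
end

section
/- Let κ, μ ∈ ℂ and let f : (0,∞) → ℂ be twice differentiable and satisfy the Whittaker equation with parameters (κ,μ). Then the function g(y) := y·f'(y) + (y/2)·f(y) − κ·f(y) is twice differentiable and satisfies the Whittaker equation with parameters (κ−1, μ). (This is the lowering-operator identity underlying the contiguous relation (y d/dy + y/2 − κ)W_{κ,μ} = −(μ² − (κ−1/2)²)W_{κ−1,μ}.) -/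
/-!
Write `A = 1/4 - μ²` and `q y = 1/4 - κ/y - A/y²`, so that `f'' = q f`. Eliminating `f''` from the
derivative of `g = y f' + (y/2) f - κ f` gives
`g' = (y/2 - κ + 1) f' + (y/4 - κ - A/y + 1/2) f`.
This again involves only `f` and `f'`, so `g` is twice differentiable although no third derivative
of `f` is assumed. Differentiating once more and eliminating `f''`, the equation
`g'' = (q + 1/y) g` becomes an identity between the coefficients of `f'` and of `f`.
-/

open Complex

/-- If `f` satisfies the Whittaker equation with parameters `(κ,μ)`,
then `g(y) = y·f'(y) + (y/2)·f(y) − κ·f(y)` is twice differentiable on `(0,∞)` and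
satisfies the Whittaker equation with parameters `(κ−1,μ)` (lowering operator). -/
theorem whittaker_lowering (κ μ : ℂ) (f : ℝ → ℂ) (hf : SatisfiesWhittaker κ μ f) :
    SatisfiesWhittaker (κ - 1) μ
      (fun y : ℝ => (y : ℂ) * deriv f y + ((y : ℂ) / 2) * f y - κ * f y) := by
  have hf' : ∀ y : ℝ, 0 < y → HasDerivAt f (deriv f y) y :=
    fun y hy => (hf y hy).1.1.hasDerivAt
  have hf'' : ∀ y : ℝ, 0 < y → HasDerivAt (deriv f)
      ((1 / 4 - κ / (y : ℂ) - (1 / 4 - μ ^ 2) / (y : ℂ) ^ 2) * f y) y := by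
    intro y hy
    refine (hf y hy).1.2.hasDerivAt.congr_deriv ?_
    linear_combination (hf y hy).2
  have hid : ∀ y : ℝ, HasDerivAt (fun y : ℝ => (y : ℂ)) 1 y := fun y => ofRealCLM.hasDerivAt
  have hg : ∀ y : ℝ, 0 < y → HasDerivAt
      (fun y : ℝ => (y : ℂ) * deriv f y + ((y : ℂ) / 2) * f y - κ * f y)
      (((y : ℂ) / 2 - κ + 1) * deriv f y +
        ((y : ℂ) / 4 - κ - (1 / 4 - μ ^ 2) * (y : ℂ)⁻¹ + 1 / 2) * f y) y := by
    intro y hy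
    have hy0 : (y : ℂ) ≠ 0 := ofReal_ne_zero.mpr hy.ne'
    refine ((((hid y).mul (hf'' y hy)).add (((hid y).div_const 2).mul (hf' y hy))).sub
      ((hf' y hy).const_mul κ)).congr_deriv ?_
    field_simp
    ring
  intro y hy
  have hy0 : (y : ℂ) ≠ 0 := by exact_mod_cast (ne_of_gt hy)
  -- The formula for `g'` holds only on `(0, ∞)`, so it is differentiated through its germ at `y`.
  have hgerm : deriv (fun y : ℝ => (y : ℂ) * deriv f y + ((y : ℂ) / 2) * f y - κ * f y)
      =ᶠ[nhds y] fun y : ℝ => ((y : ℂ) / 2 - κ + 1) * deriv f y +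
        ((y : ℂ) / 4 - κ - (1 / 4 - μ ^ 2) * (y : ℂ)⁻¹ + 1 / 2) * f y := by
    filter_upwards [Ioi_mem_nhds hy] with z hz using (hg z hz).deriv
  have hinv : HasDerivAt (fun y : ℝ => (y : ℂ)⁻¹) (-1 / (y : ℂ) ^ 2) y := (hid y).fun_inv hy0
  have hg' := (((((hid y).div_const 2).sub_const κ).add_const 1).mul (hf'' y hy)).add
    ((((((hid y).div_const 4).sub_const κ).sub (hinv.const_mul (1 / 4 - μ ^ 2))).add_const
      (1 / 2)).mul (hf' y hy))
  have hg'' := hg'.congr_of_eventuallyEq hgerm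
  refine ⟨⟨(hg y hy).differentiableAt, hg''.differentiableAt⟩, ?_⟩
  rw [hg''.deriv]
  simp only [Pi.sub_apply]
  field_simp
  ring
end

section
/- Let Λ₁, Λ₂ ∈ ℝ with d := Λ₁ − Λ₂ a positive integer, let c₀ ∈ ℝ, and let T denote the operator of multiplication by the function 4πc₀·a₁/a₂. Suppose smooth functions φ₀,…,φ_d : (0,∞)² → ℂ satisfy, with ∂₁ = a₁∂/∂a₁ and ∂₂ = a₂∂/∂a₂: (A_i): (∂₁−∂₂−Λ₁+Λ₂+2i−T)φ_i − 2(Λ₁+Λ₂)φ_{i+1} + (∂₁−∂₂+Λ₁−Λ₂−2i−4+T)φ_{i+2} = 0 for 0 ≤ i ≤ d−2; (B_i): (∂₁+∂₂−Λ₁+Λ₂−2)φ_{i+1} = 0 for 0 ≤ i ≤ d−2; (C_i): i(−∂₁+∂₂+T+Λ₁−Λ₂−2i+2)φ_{i−1} + (Λ₁−Λ₂−2i)(∂₁+∂₂−Λ₁−Λ₂−2)φ_i + (Λ₁−Λ₂−i)(∂₁−∂₂+T+Λ₁−Λ₂−2i−2)φ_{i+1} = 0 for 0 ≤ i ≤ d.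 Then for every 0 ≤ i ≤ d−1 the first-order relation (D_i) holds: (∂₁+∂₂−Λ₁−Λ₂−2i−2)φ_i + (∂₁−∂₂+T+Λ₁−Λ₂−2i−2)φ_{i+1} = 0. (Indeed d·(D_i) = i·(A_{i−1}) + 2i·(B_{i−1}) + (C_i).) -/
/-!
Since `d = Λ₁ - Λ₂` is nonzero, the relation follows from the pointwise linear identity
`d · (D_i) = i · (A_{i-1}) + 2i · (B_{i-1}) + (C_i)`. For `i = 0` it reads `d · (D_0) = (C_0)`, so
the relations with index `i - 1` are needed only for `1 ≤ i`, where `i - 1 ≤ d - 2`.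
-/


open Complex Real

/-- Euler operator `∂₁ = a₁·∂/∂a₁` in the first variable. -/
noncomputable def eul1 (φ : ℝ → ℝ → ℂ) : ℝ → ℝ → ℂ :=
  fun x y => (x : ℂ) * deriv (fun t => φ t y) x

/-- Euler operator `∂₂ = a₂·∂/∂a₂` in the second variable. -/
noncomputable def eul2 (φ : ℝ → ℝ → ℂ) : ℝ → ℝ → ℂ :=
  fun x y => (y : ℂ) * deriv (fun t => φ x t) y

/-- From the system (A_i), (B_i), (C_i) satisfied by the radial parts
`φ₀, …, φ_d` of degenerate Whittaker functions (case `c₀ ≠ 0`, `c₃ = 0`), the first-order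
relations (D_i) follow for `0 ≤ i ≤ d−1`:
`(∂₁+∂₂−Λ₁−Λ₂−2i−2)φ_i + (∂₁−∂₂+T+Λ₁−Λ₂−2i−2)φ_{i+1} = 0`,
where `T` is multiplication by `4πc₀·a₁/a₂`. -/
theorem system_implies_D (Λ₁ Λ₂ c₀ : ℝ) (d : ℕ) (hd : 0 < d) (hΛ : Λ₁ - Λ₂ = (d : ℝ))
    (φ : ℕ → ℝ → ℝ → ℂ)
    (hsm : ∀ i ≤ d, ContDiffOn ℝ (⊤ : ℕ∞) (Function.uncurry (φ i))
      {p : ℝ × ℝ | 0 < p.1 ∧ 0 < p.2})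
    (hA : ∀ i, i ≤ d - 2 → ∀ x y : ℝ, 0 < x → 0 < y →
      (eul1 (φ i) x y - eul2 (φ i) x y + ((-Λ₁ + Λ₂ + 2 * i : ℝ) : ℂ) * φ i x y
          - ((4 * Real.pi * c₀ * x / y : ℝ) : ℂ) * φ i x y)
        - 2 * ((Λ₁ + Λ₂ : ℝ) : ℂ) * φ (i + 1) x y
        + (eul1 (φ (i + 2)) x y - eul2 (φ (i + 2)) x y
            + ((Λ₁ - Λ₂ - 2 * i - 4 : ℝ) : ℂ) * φ (i + 2) x y
            + ((4 * Real.pi * c₀ * x / y : ℝ) : ℂ) * φ (i + 2) x y) = 0)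
    (hB : ∀ i, i ≤ d - 2 → ∀ x y : ℝ, 0 < x → 0 < y →
      eul1 (φ (i + 1)) x y + eul2 (φ (i + 1)) x y
        + ((-Λ₁ + Λ₂ - 2 : ℝ) : ℂ) * φ (i + 1) x y = 0)
    (hC : ∀ i, i ≤ d → ∀ x y : ℝ, 0 < x → 0 < y →
      (i : ℂ) * (-eul1 (φ (i - 1)) x y + eul2 (φ (i - 1)) x y
          + ((4 * Real.pi * c₀ * x / y : ℝ) : ℂ) * φ (i - 1) x y
          + ((Λ₁ - Λ₂ - 2 * i + 2 : ℝ) : ℂ) * φ (i - 1) x y)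
        + ((Λ₁ - Λ₂ - 2 * i : ℝ) : ℂ) * (eul1 (φ i) x y + eul2 (φ i) x y
            + ((-Λ₁ - Λ₂ - 2 : ℝ) : ℂ) * φ i x y)
        + ((Λ₁ - Λ₂ - i : ℝ) : ℂ) * (eul1 (φ (i + 1)) x y - eul2 (φ (i + 1)) x y
            + ((4 * Real.pi * c₀ * x / y : ℝ) : ℂ) * φ (i + 1) x y
            + ((Λ₁ - Λ₂ - 2 * i - 2 : ℝ) : ℂ) * φ (i + 1) x y) = 0) :
    ∀ i, i ≤ d - 1 → ∀ x y : ℝ, 0 < x → 0 < y →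
      (eul1 (φ i) x y + eul2 (φ i) x y + ((-Λ₁ - Λ₂ - 2 * i - 2 : ℝ) : ℂ) * φ i x y)
        + (eul1 (φ (i + 1)) x y - eul2 (φ (i + 1)) x y
            + ((4 * Real.pi * c₀ * x / y : ℝ) : ℂ) * φ (i + 1) x y
            + ((Λ₁ - Λ₂ - 2 * i - 2 : ℝ) : ℂ) * φ (i + 1) x y) = 0 := by
  intro i hi x y hx hy
  have hd0 : (d : ℂ) ≠ 0 := Nat.cast_ne_zero.mpr hd.ne'
  have hΛ' : (Λ₁ : ℂ) = Λ₂ + d := by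
    rw [← sub_eq_iff_eq_add']; exact_mod_cast congrArg (fun r : ℝ => (r : ℂ)) hΛ
  have hCi := hC i (by omega) x y hx hy
  apply mul_left_cancel₀ hd0
  rw [mul_zero]
  rcases i with _ | j
  -- For `i = 0` the multiplier of the `φ_{i-1}` term in `(C_i)` vanishes.
  · push_cast at hCi ⊢
    rw [hΛ'] at hCi ⊢
    linear_combination hCi
  · have hAj := hA j (by omega) x y hx hy
    have hBj := hB j (by omega) x y hx hy
    generalize ((4 * Real.pi * c₀ * x / y : ℝ) : ℂ) = T at hAj hCi ⊢
    simp only [Nat.add_sub_cancel, add_assoc, Nat.reduceAdd] at hCi hAj hBj ⊢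
    push_cast at hCi hAj hBj ⊢
    rw [hΛ'] at hCi hAj hBj ⊢
    linear_combination ((j : ℂ) + 1) * hAj + 2 * ((j : ℂ) + 1) * hBj + hCi
end

section
/- Let Λ₁ ∈ ℝ and Λ₂ ∈ ℝ with Λ₂ ≠ 0. Suppose φ : (0,∞)² → ℂ is C² and satisfies a₁·∂φ/∂a₁ = (Λ₁+1)·φ and (∂₂−1)²φ = Λ₂²·φ, where ∂₂ = a₂·∂/∂a₂. Then there exist constants C, D ∈ ℂ such that φ(a₁,a₂) = C·a₁^{Λ₁+1}·a₂^{Λ₂+1} + D·a₁^{Λ₁+1}·a₂^{1−Λ₂} for all (a₁,a₂) ∈ (0,∞)². -/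
/-!
The solutions on `(0,∞)` of the first-order Euler equation `t·g' = s·g` are the multiples of `t^s`,
since `g·t^(-s)` has derivative zero (`euler_first_order`). This gives `φ(x,y) = φ(1,y)·x^(Λ₁+1)` at
once. In the second variable write `f = φ(1,·)` and `u = (∂₂−1)f`. The operator factors as
`(∂₂−1)² − Λ₂² = (∂₂−1−Λ₂)(∂₂−1+Λ₂)`, so `u + Λ₂f` and `u − Λ₂f` satisfy first-order Euler equations
with exponents `1+Λ₂` and `1−Λ₂`; as `Λ₂ ≠ 0`, `f` is their difference divided by `2Λ₂`.
-/

open Complex Real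

theorem euler_first_order (s : ℝ) (g : ℝ → ℂ)
    (hd : ∀ t : ℝ, 0 < t → DifferentiableAt ℝ g t)
    (h : ∀ t : ℝ, 0 < t → (t : ℂ) * deriv g t = (s : ℂ) * g t) :
    ∀ t : ℝ, 0 < t → g t = g 1 * ((t ^ s : ℝ) : ℂ) := by
  have key : ∀ t ∈ Set.Ioi (0 : ℝ),
      HasDerivAt (fun r : ℝ => g r * ((r ^ (-s) : ℝ) : ℂ)) 0 t := by
    intro t ht
    have ht : 0 < t := ht
    have h3 := (hd t ht).hasDerivAt.mul
      (Real.hasDerivAt_rpow_const (p := -s) (Or.inl ht.ne')).ofReal_comp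
    refine h3.congr_deriv ?_
    have e : t ^ (-s) = t * t ^ (-s - 1) := by
      rw [Real.rpow_sub_one ht.ne']; field_simp
    rw [e]
    push_cast
    linear_combination ((t ^ (-s - 1) : ℝ) : ℂ) * h t ht
  intro t ht
  have h4 : g t * ((t ^ (-s) : ℝ) : ℂ) = g 1 * (((1 : ℝ) ^ (-s) : ℝ) : ℂ) :=
    isOpen_Ioi.is_const_of_deriv_eq_zero isPreconnected_Ioi
      (fun r hr => (key r hr).differentiableAt.differentiableWithinAt)
      (fun r hr => (key r hr).deriv) (Set.mem_Ioi.2 ht) (Set.mem_Ioi.2 one_pos)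
  have e : ((t ^ (-s) : ℝ) : ℂ) * ((t ^ s : ℝ) : ℂ) = 1 := by
    rw [← Complex.ofReal_mul, ← Real.rpow_add ht]; simp
  rw [Real.one_rpow, Complex.ofReal_one, mul_one] at h4
  rw [← h4, mul_assoc, e, mul_one]

/-- If `φ` is C² on `(0,∞)²`, `a₁·∂φ/∂a₁ = (Λ₁+1)·φ` and
`(∂₂−1)²φ = Λ₂²·φ` with `Λ₂ ≠ 0`, then
`φ(a₁,a₂) = C·a₁^{Λ₁+1}·a₂^{Λ₂+1} + D·a₁^{Λ₁+1}·a₂^{1−Λ₂}` for some constants `C, D`. -/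
theorem euler_ode_solution (Λ₁ Λ₂ : ℝ) (hΛ₂ : Λ₂ ≠ 0) (φ : ℝ → ℝ → ℂ)
    (hsm : ContDiffOn ℝ 2 (Function.uncurry φ) {p : ℝ × ℝ | 0 < p.1 ∧ 0 < p.2})
    (h1 : ∀ x y : ℝ, 0 < x → 0 < y →
      (x : ℂ) * deriv (fun t => φ t y) x = ((Λ₁ + 1 : ℝ) : ℂ) * φ x y)
    (h2 : ∀ x y : ℝ, 0 < x → 0 < y →
      eul2 (fun a b => eul2 φ a b - φ a b) x y - (eul2 φ x y - φ x y) =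
        ((Λ₂ : ℂ)) ^ 2 * φ x y) :
    ∃ C D : ℂ, ∀ x y : ℝ, 0 < x → 0 < y →
      φ x y = C * ((x ^ (Λ₁ + 1) : ℝ) : ℂ) * ((y ^ (Λ₂ + 1) : ℝ) : ℂ)
        + D * ((x ^ (Λ₁ + 1) : ℝ) : ℂ) * ((y ^ (1 - Λ₂) : ℝ) : ℂ) := by
  have hopen : IsOpen {p : ℝ × ℝ | 0 < p.1 ∧ 0 < p.2} :=
    (isOpen_lt continuous_const continuous_fst).inter (isOpen_lt continuous_const continuous_snd)
  have hat : ∀ x y : ℝ, 0 < x → 0 < y → ContDiffAt ℝ 2 (Function.uncurry φ) (x, y) :=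
    fun x y hx hy => hsm.contDiffAt (hopen.mem_nhds ⟨hx, hy⟩)
  have hX : ∀ x y : ℝ, 0 < x → 0 < y → φ x y = φ 1 y * ((x ^ (Λ₁ + 1) : ℝ) : ℂ) := by
    intro x y hx hy
    refine euler_first_order (Λ₁ + 1) (fun t => φ t y) (fun t ht => ?_)
      (fun t ht => h1 t y ht hy) x hx
    have : ContDiffAt ℝ 2 (fun t : ℝ => Function.uncurry φ (t, y)) t :=
      (hat t y ht hy).comp t (contDiffAt_id.prodMk contDiffAt_const)
    exact this.differentiableAt (by norm_num)
  have hf : ∀ y : ℝ, 0 < y → ContDiffAt ℝ 2 (φ 1) y := fun y hy =>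
    ContDiffAt.comp (g := Function.uncurry φ) y (hat 1 y one_pos hy)
      (contDiffAt_const.prodMk contDiffAt_id)
  have hfd : ∀ y : ℝ, 0 < y → DifferentiableAt ℝ (φ 1) y :=
    fun y hy => (hf y hy).differentiableAt (by norm_num)
  set u : ℝ → ℂ := fun y => (y : ℂ) * deriv (φ 1) y - φ 1 y with hu
  have hud : ∀ y : ℝ, 0 < y → DifferentiableAt ℝ u y := by
    intro y hy
    have h3 : DifferentiableAt ℝ (deriv (φ 1)) y :=
      ((hf y hy).derivWithin (m := 1) (by norm_num)).differentiableAt (by norm_num)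
    exact ((hasDerivAt_id y).ofReal_comp.differentiableAt.mul h3).sub (hfd y hy)
  have hu2 : ∀ y : ℝ, 0 < y → (y : ℂ) * deriv u y - u y = (Λ₂ : ℂ) ^ 2 * φ 1 y :=
    fun y hy => h2 1 y one_pos hy
  -- For `c² = Λ₂²`, the factor `u + c·f` of the second-order equation has exponent `1 + c`.
  have hfac : ∀ c : ℝ, c ^ 2 = Λ₂ ^ 2 → ∀ y : ℝ, 0 < y →
      u y + c * φ 1 y = (u 1 + c * φ 1 1) * ((y ^ (1 + c) : ℝ) : ℂ) := by
    intro c hc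
    have hc' : (c : ℂ) ^ 2 = (Λ₂ : ℂ) ^ 2 := by exact_mod_cast hc
    refine euler_first_order (1 + c) (fun y => u y + c * φ 1 y)
      (fun y hy => (hud y hy).add ((hfd y hy).const_mul _)) (fun y hy => ?_)
    have hD := ((hud y hy).hasDerivAt.add ((hfd y hy).hasDerivAt.const_mul (c : ℂ))).deriv
    have hD' : deriv (fun y => u y + c * φ 1 y) y = deriv u y + c * deriv (φ 1) y := hD
    have huy : u y = (y : ℂ) * deriv (φ 1) y - φ 1 y := rfl
    rw [hD']
    push_cast
    linear_combination hu2 y hy - (c : ℂ) * huy - φ 1 y * hc'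
  have hΛ : (Λ₂ : ℂ) ≠ 0 := Complex.ofReal_ne_zero.2 hΛ₂
  refine ⟨(u 1 + Λ₂ * φ 1 1) / (2 * Λ₂), -(u 1 - Λ₂ * φ 1 1) / (2 * Λ₂), fun x y hx hy => ?_⟩
  have hP := hfac Λ₂ rfl y hy
  have hQ := hfac (-Λ₂) (by ring) y hy
  rw [← sub_eq_add_neg] at hQ
  rw [add_comm (1 : ℝ)] at hP
  rw [Complex.ofReal_neg] at hQ
  rw [hX x y hx hy]
  generalize ((x ^ (Λ₁ + 1) : ℝ) : ℂ) = X at *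
  generalize ((y ^ (Λ₂ + 1) : ℝ) : ℂ) = Y at *
  generalize ((y ^ (1 - Λ₂) : ℝ) : ℂ) = Z at *
  field_simp
  linear_combination X * hP - X * hQ
end
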